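/- arXiv:2508.18857 — 3 statements merged into one kernel-verified Lean document; each statement's English description precedes it below -/
import Mathlib

section
/- Every good sequence occurs as a row of the cumulative distance-count matrix of some finite simple graph: for every good sequence (a_0, a_1, …, a_{n−1}), there exist a simple graph G on n vertices and a vertex v of G such that m_p(v) = a_p for all p = 0, 1, …, n−1. -/
/-- `mCount G k v` is the number of vertices `w` that are connected to `v` and whose
shortest-path distance to `v` is at most `k`. -/
noncomputable def mCount {V : Type*} [Fintype V] (G : SimpleGraph V) (k : ℕ) (v : V) : ℕ :=
  {w | G.Reachable w v ∧ G.dist w v ≤ k}.ncard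

/-!
For `ℓ : V → ℕ∞`, join two vertices when their `ℓ`-values are consecutive natural numbers. If
`v` is the only vertex at level `0` and no level below an inhabited one is empty, then `ℓ w` is
the distance from `w` to `v`: it changes by at most one along an edge, and from every vertex of
positive finite level one can step down. Hence an increasing chain of sets starting at `{v}` that
never resumes growing once it stalls is the sequence of balls around `v`, with `ℓ` the time at
which a vertex enters the chain; vertices that never enter have level `⊤` and are isolated. A good
sequence `a` is realised by the chain of initial segments of `Fin n` of sizes `a p`.
-/

section Distance

variable {V : Type*} {G : SimpleGraph V} {f : V → ℕ∞}

theorem mCount_eq_ncard_edist_le [Fintype V] (k : ℕ) (v : V) :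
    mCount G k v = {w | G.edist w v ≤ k}.ncard := by
  have hiff (w : V) : G.Reachable w v ∧ G.dist w v ≤ k ↔ G.edist w v ≤ k := by
    constructor
    · rintro ⟨hreach, hdist⟩
      rw [← hreach.coe_dist_eq_edist]
      exact_mod_cast hdist
    · intro hedist
      have hreach : G.Reachable w v :=
        G.reachable_of_edist_ne_top (ne_top_of_le_ne_top (ENat.natCast_ne_top k) hedist)
      rw [← hreach.coe_dist_eq_edist] at hedist
      exact ⟨hreach, by exact_mod_cast hedist⟩
  simp only [mCount, hiff]

theorem le_edist_add_of_forall_adj (hf : ∀ u w, G.Adj u w → f u ≤ f w + 1) (u w : V) :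
    f u ≤ G.edist u w + f w := by
  have hwalk {x y : V} (q : G.Walk x y) : f x ≤ q.length + f y := by
    induction q with
    | nil => simp
    | @cons x y z hadj q ih =>
      calc f x ≤ f y + 1 := hf x y hadj
        _ ≤ q.length + f z + 1 := by gcongr
        _ = (q.cons hadj).length + f z := by push_cast [SimpleGraph.Walk.length_cons]; ring
  by_cases hreach : G.Reachable u w
  · obtain ⟨q, hq⟩ := hreach.exists_walk_length_eq_edist
    exact hq ▸ hwalk q
  · simp [SimpleGraph.edist_eq_top_of_not_reachable hreach]

theorem edist_le_of_exists_adj {v : V} (hzero : ∀ w, f w = 0 → w = v)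
    (hdescent : ∀ w, ∀ i : ℕ, f w = i + 1 → ∃ u, G.Adj w u ∧ f u = i) (w : V) :
    G.edist w v ≤ f w := by
  have hfinite (i : ℕ) : ∀ w, f w = i → G.edist w v ≤ i := by
    induction i with
    | zero =>
      intro w hw
      simp [hzero w (by simpa using hw)]
    | succ i ih =>
      intro w hw
      obtain ⟨u, hadj, hu⟩ := hdescent w i (by simpa using hw)
      calc G.edist w v ≤ G.edist w u + G.edist u v := G.edist_triangle
        _ ≤ 1 + i := add_le_add (SimpleGraph.edist_eq_one_iff_adj.2 hadj).le (ih u hu)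
        _ = (i + 1 : ℕ) := by push_cast; ring
  cases hw : f w with
  | top => exact le_top
  | coe i => exact hfinite i w hw

end Distance

/-- The graph obtained from a division of the vertices into levels by joining all pairs of
vertices at consecutive finite levels. As `⊤ : ℕ∞` covers nothing, the vertices of level `⊤` are
isolated. -/
def layerGraph {V : Type*} (ℓ : V → ℕ∞) : SimpleGraph V :=
  (SimpleGraph.hasse ℕ∞).comap ℓ

namespace layerGraph

variable {V : Type*} {ℓ : V → ℕ∞}

theorem adj_iff {u w : V} : (layerGraph ℓ).Adj u w ↔ ℓ u ⋖ ℓ w ∨ ℓ w ⋖ ℓ u :=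
  Iff.rfl

theorem le_add_one_of_adj (u w : V) (hadj : (layerGraph ℓ).Adj u w) : ℓ u ≤ ℓ w + 1 := by
  rcases adj_iff.1 hadj with hcov | hcov
  · exact hcov.le.trans le_self_add
  · exact (Order.succ_eq_add_one (ℓ w) ▸ hcov.succ_eq).ge

theorem edist_eq {v : V} (hzero : ∀ w, ℓ w = 0 ↔ w = v)
    (hlevel : ∀ w, ∀ i : ℕ, ℓ w = i + 1 → ∃ u, ℓ u = i) (w : V) :
    (layerGraph ℓ).edist w v = ℓ w := by
  apply le_antisymm
  · refine edist_le_of_exists_adj (fun w => (hzero w).1) (fun w i hw => ?_) w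
    obtain ⟨u, hu⟩ := hlevel w i hw
    refine ⟨u, adj_iff.2 (Or.inr ?_), hu⟩
    rw [hu, hw, ← Order.succ_eq_add_one]
    exact Order.covBy_succ_of_not_isMax (by simp)
  · calc ℓ w ≤ (layerGraph ℓ).edist w v + ℓ v := le_edist_add_of_forall_adj le_add_one_of_adj w v
      _ = (layerGraph ℓ).edist w v := by rw [(hzero v).2 rfl, add_zero]

end layerGraph

/-- The first index at which `w` belongs to a member of the sequence of sets `S`; it serves as the
level of `w`, and is `⊤` if `w` belongs to no member. -/
noncomputable def entryTime {V : Type*} (S : ℕ → Set V) (w : V) : ℕ∞ :=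
  sInf ((↑) '' {p : ℕ | w ∈ S p})

section Chain

variable {V : Type*} {S : ℕ → Set V}

theorem entryTime_le_iff (hS : Monotone S) {w : V} {p : ℕ} : entryTime S w ≤ p ↔ w ∈ S p := by
  constructor
  · intro hle
    have hne : ((↑) '' {q : ℕ | w ∈ S q} : Set ℕ∞).Nonempty := by
      by_contra hempty
      simp [entryTime, Set.not_nonempty_iff_eq_empty.1 hempty] at hle
    obtain ⟨q, hq, hqw⟩ := csInf_mem hne
    have hqp : q ≤ p := by exact_mod_cast hqw.trans_le hle
    exact hS hqp hq
  · exact fun hw => sInf_le ⟨p, hw, rfl⟩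

theorem entryTime_eq_zero_iff (hS : Monotone S) {w : V} : entryTime S w = 0 ↔ w ∈ S 0 := by
  simp [← entryTime_le_iff hS]

theorem entryTime_eq_add_one_iff (hS : Monotone S) {w : V} {p : ℕ} :
    entryTime S w = p + 1 ↔ w ∈ S (p + 1) ∧ w ∉ S p := by
  rw [← entryTime_le_iff hS, ← entryTime_le_iff hS, not_le, ← ENat.add_one_le_iff (by simp),
    Nat.cast_add_one, le_antisymm_iff]

theorem exists_entryTime_eq (hS : Monotone S) (hne : (S 0).Nonempty)
    (hstall : ∀ i, S i = S (i + 1) → S (i + 1) = S (i + 2)) {w : V} {i : ℕ}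
    (hw : entryTime S w = i + 1) : ∃ u, entryTime S u = i := by
  obtain ⟨hmem, hnot⟩ := (entryTime_eq_add_one_iff hS).1 hw
  cases i with
  | zero => exact hne.imp fun u hu => by simpa using (entryTime_eq_zero_iff hS).2 hu
  | succ i =>
    have hgrow : S i ≠ S (i + 1) := fun heq => hnot (hstall i heq ▸ hmem)
    obtain ⟨u, hu⟩ := Set.exists_of_ssubset ((hS i.le_succ).ssubset_of_ne hgrow)
    exact ⟨u, by simpa using (entryTime_eq_add_one_iff hS).2 hu⟩

theorem exists_graph_setOf_edist_le_eq {v : V} (hS : Monotone S) (hzero : S 0 = {v})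
    (hstall : ∀ i, S i = S (i + 1) → S (i + 1) = S (i + 2)) :
    ∃ G : SimpleGraph V, ∀ p : ℕ, {w | G.edist w v ≤ p} = S p := by
  refine ⟨layerGraph (entryTime S), fun p => ?_⟩
  have hroot (w : V) : entryTime S w = 0 ↔ w = v := by
    rw [entryTime_eq_zero_iff hS, hzero, Set.mem_singleton_iff]
  have hlevel (w : V) (i : ℕ) : entryTime S w = i + 1 → ∃ u, entryTime S u = i :=
    exists_entryTime_eq hS (hzero ▸ Set.singleton_nonempty v) hstall
  ext w
  rw [Set.mem_ofPred_eq, layerGraph.edist_eq hroot hlevel, entryTime_le_iff hS]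

end Chain

section Truncation

variable {α : Type*} {a : ℕ → α} {j : ℕ}

theorem monotone_comp_min_of_monotoneOn_Iic [Preorder α] (ha : MonotoneOn a (Set.Iic j)) :
    Monotone fun p => a (min p j) :=
  fun p q hpq => ha (min_le_right p j) (min_le_right q j) (min_le_min_right j hpq)

theorem comp_min_succ_eq_of_eq (ha : Set.InjOn a (Set.Iic j)) (i : ℕ)
    (heq : a (min i j) = a (min (i + 1) j)) : a (min (i + 1) j) = a (min (i + 2) j) := by
  have hmin : min i j = min (i + 1) j := ha (min_le_right i j) (min_le_right (i + 1) j) heq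
  have hji : j ≤ i := by omega
  rw [min_eq_right (by omega : j ≤ i + 1), min_eq_right (by omega : j ≤ i + 2)]

end Truncation

section InitialSegments

variable {n : ℕ}

theorem ncard_setOf_fin_val_lt (m : ℕ) : {w : Fin n | (w : ℕ) < m}.ncard = min n m := by
  rw [Set.ncard_eq_toFinset_card', Set.toFinset_ofPred, Fin.card_filter_val_lt]

theorem exists_graph_mCount_eq {b : ℕ → ℕ} (hn : 0 < n) (hb : Monotone b) (hzero : b 0 = 1)
    (hbound : ∀ i, b i ≤ n) (hstall : ∀ i, b i = b (i + 1) → b (i + 1) = b (i + 2)) :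
    ∃ G : SimpleGraph (Fin n), ∀ p, mCount G p ⟨0, hn⟩ = b p := by
  let S : ℕ → Set (Fin n) := fun p => {w | (w : ℕ) < b p}
  have hcard (p : ℕ) : (S p).ncard = b p := by
    rw [ncard_setOf_fin_val_lt, min_eq_right (hbound p)]
  have hmono : Monotone S := fun p q hpq w hw => lt_of_lt_of_le hw (hb hpq)
  have hroot : S 0 = {⟨0, hn⟩} := by
    ext w
    simp [S, hzero, Fin.ext_iff]
  have hstallS (i : ℕ) (hi : S i = S (i + 1)) : S (i + 1) = S (i + 2) := by
    have hbi : b i = b (i + 1) := by rw [← hcard, hi, hcard]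
    simp only [S, hstall i hbi]
  obtain ⟨G, hG⟩ := exists_graph_setOf_edist_le_eq hmono hroot hstallS
  exact ⟨G, fun p => by rw [mCount_eq_ncard_edist_le, hG, hcard]⟩

end InitialSegments

/-- Every good sequence `(a_0, …, a_{n-1})` (a sequence of positive integers with
`a_0 = 1` which is strictly increasing up to some index `j` where it reaches a value
`k ≤ n`, and is constantly `k` afterwards) occurs as a row of the cumulative
distance-count matrix of some finite simple graph on `n` vertices: there are a simple
graph `G` on `n` vertices and a vertex `v` with `m_p(v) = a_p` for all `p < n`. -/
theorem good_sequence_is_CDCM_row (n : ℕ) (hn : 1 ≤ n) (a : ℕ → ℕ)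
    (hpos : ∀ i, i ≤ n - 1 → 1 ≤ a i) (h0 : a 0 = 1)
    (hgood : ∃ j k, k ≤ n ∧ j ≤ n - 1 ∧ (∀ i, i < j → a i < a (i + 1)) ∧
      a j = k ∧ ∀ r, j ≤ r → r ≤ n - 1 → a r = k) :
    ∃ (G : SimpleGraph (Fin n)) (v : Fin n), ∀ p, p ≤ n - 1 → mCount G p v = a p := by
  obtain ⟨j, k, hk, -, hlt, hj, hconst⟩ := hgood
  have hstrict : StrictMonoOn a (Set.Iic j) := strictMonoOn_Iic_of_lt_succ hlt
  have hbound (p : ℕ) : a (min p j) ≤ n :=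
    (hstrict.monotoneOn (min_le_right p j) Set.self_mem_Iic (min_le_right p j)).trans (hj ▸ hk)
  obtain ⟨G, hG⟩ := exists_graph_mCount_eq hn
    (monotone_comp_min_of_monotoneOn_Iic hstrict.monotoneOn) (by rwa [Nat.zero_min]) hbound
    (comp_min_succ_eq_of_eq hstrict.injOn)
  refine ⟨G, ⟨0, hn⟩, fun p hp => (hG p).trans ?_⟩
  rcases le_total p j with hpj | hjp
  · rw [min_eq_left hpj]
  · rw [min_eq_right hjp, hj, hconst p hjp hp]
end

section
/- Let m ≥ 1 and let a_1, …, a_{3m} be natural numbers with a_i ≥ 1 for all i and Σ_{i=1}^{3m} a_i = m·t. If there exists a three-partition of {1,…,3m} into m disjoint triples each with sum t, then there exists a simple graph G on n = (t+4)·m vertices whose distance-count matrix equals M(a) up to permutation of rows; that is, the multiset of rows (n_0(v), n_1(v), …, n_{n−1}(v)) over all vertices v of G equals the multiset consisting of: the row (1, a_i, 1, t−a_i, 2, 0, …, 0) for each i = 1,…,3m; the row (1, 2, t−1, 2, 0, …, 0) with multiplicity s = m·t; and the row (1, t, 3, 0, …, 0) with multiplicity m. -/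
/-- A three-partition of the instance `a : Fin (3*m) → ℕ` with common sum `t`:
a partition of the index set into `m` pairwise disjoint sets `D_1, …, D_m`, each of
size `3`, such that the elements indexed by each `D_j` sum to `t`. -/
def HasThreePartition (m t : ℕ) (a : Fin (3 * m) → ℕ) : Prop :=
  ∃ D : Fin m → Finset (Fin (3 * m)),
    (∀ j j', j ≠ j' → Disjoint (D j) (D j')) ∧
    (⋃ j, (D j : Set (Fin (3 * m)))) = Set.univ ∧
    (∀ j, (D j).card = 3) ∧
    (∀ j, ∑ i ∈ D j, a i = t)

/-- `nCount G k v` is the number of vertices `w` that are connected to `v` and whose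
shortest-path distance to `v` is exactly `k`. -/
noncomputable def nCount {V : Type*} [Fintype V] (G : SimpleGraph V) (k : ℕ) (v : V) : ℕ :=
  {w | G.Reachable w v ∧ G.dist w v = k}.ncard

/-- The multiset of rows of the distance-count matrix of a graph `G` on `n` vertices:
the row of vertex `v` has `k`-th entry `n_k(v)`, for `k = 0, …, n-1`. -/
noncomputable def dcmRows {V : Type*} [Fintype V] (G : SimpleGraph V) (n : ℕ) :
    Multiset (Fin n → ℕ) :=
  Multiset.map (fun v => fun k : Fin n => nCount G (k : ℕ) v) Finset.univ.val

/-- The row `(1, aᵢ, 1, t - aᵢ, 2, 0, …, 0)` of length `n`. -/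
def rowI (n t ai : ℕ) : Fin n → ℕ := fun k =>
  if (k : ℕ) = 0 then 1 else if (k : ℕ) = 1 then ai else if (k : ℕ) = 2 then 1
  else if (k : ℕ) = 3 then t - ai else if (k : ℕ) = 4 then 2 else 0

/-- The row `(1, 2, t - 1, 2, 0, …, 0)` of length `n`. -/
def rowII (n t : ℕ) : Fin n → ℕ := fun k =>
  if (k : ℕ) = 0 then 1 else if (k : ℕ) = 1 then 2 else if (k : ℕ) = 2 then t - 1
  else if (k : ℕ) = 3 then 2 else 0

/-- The row `(1, t, 3, 0, …, 0)` of length `n`. -/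
def rowIII (n t : ℕ) : Fin n → ℕ := fun k =>
  if (k : ℕ) = 0 then 1 else if (k : ℕ) = 1 then t else if (k : ℕ) = 2 then 3 else 0

/-- The multiset of rows of the matrix `M(a)`: the row `(1, aᵢ, 1, t - aᵢ, 2, 0, …, 0)`
for each `i = 1, …, 3m`, the row `(1, 2, t - 1, 2, 0, …, 0)` with multiplicity
`s = m·t`, and the row `(1, t, 3, 0, …, 0)` with multiplicity `m`. -/
def targetRows (m t : ℕ) (a : Fin (3 * m) → ℕ) :
    Multiset (Fin (4 * m + m * t) → ℕ) :=
  Multiset.map (fun i => rowI (4 * m + m * t) t (a i)) Finset.univ.val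
    + Multiset.replicate (m * t) (rowII (4 * m + m * t) t)
    + Multiset.replicate m (rowIII (4 * m + m * t) t)

/-!
For each triple `D` of the three-partition take a hub, one terminal for each `i ∈ D`, and `a i`
internally disjoint paths of length two from the hub to terminal `i`. The `t` midpoints of these
paths are pairwise at distance two through the hub, and distinct terminals are at distance four.
Hence the hub sees `t` vertices at distance one and three at distance two; a midpoint is next to
its terminal and the hub and at distance three from the other two terminals; and terminal `i` sees
its `a i` midpoints, the hub, the other `t - a i` midpoints and the other two terminals in turn.
The disjoint union of these graphs over all triples realises the prescribed rows.
-/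

open scoped Finset

theorem sum_univ_eq_sum_of_partition {ι κ M : Type*} [Fintype ι] [Fintype κ] [AddCommMonoid M]
    {D : κ → Finset ι} (hdisj : Pairwise (Function.onFun Disjoint D))
    (hcover : (⋃ j, (D j : Set ι)) = Set.univ) (f : ι → M) :
    ∑ i, f i = ∑ j, ∑ i ∈ D j, f i := by
  classical
  have hunion : Finset.univ.biUnion D = Finset.univ := by
    simpa [← Finset.coe_inj] using hcover
  rw [← hunion, Finset.sum_biUnion (hdisj.set_pairwise _)]

section Distance

variable {V W : Type*} {G : SimpleGraph V} {H : SimpleGraph W}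

theorem edist_eq_of_layering {v : V} {f : V → ℕ} (hzero : f v = 0)
    (hlip : ∀ x y, G.Adj x y → f y ≤ f x + 1)
    (hpred : ∀ w, w ≠ v → ∃ u, G.Adj u w ∧ f w = f u + 1) (w : V) :
    G.edist v w = f w := by
  apply le_antisymm
  · induction hn : f w generalizing w with
    | zero =>
      obtain rfl : w = v := by
        by_contra hne
        obtain ⟨u, -, hu⟩ := hpred w hne
        omega
      simp
    | succ n ih =>
      obtain ⟨u, huw, hu⟩ := hpred w (by rintro rfl; omega)
      calc G.edist v w ≤ G.edist v u + G.edist u w := G.edist_triangle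
        _ ≤ n + 1 := add_le_add (ih u (by omega)) (SimpleGraph.edist_eq_one_iff_adj.mpr huw).le
        _ = (n + 1 : ℕ) := by push_cast; rfl
  · have hwalk : ∀ {x y : V} (p : G.Walk x y), f y ≤ f x + p.length := by
      intro x y p
      induction p with
      | nil => simp
      | cons hadj p ih =>
        have := hlip _ _ hadj
        rw [SimpleGraph.Walk.length_cons]
        omega
    refine le_iInf fun p => ?_
    have hp := hwalk p
    rw [hzero, zero_add] at hp
    exact_mod_cast hp

theorem exists_walk_length_eq_of_adj_closed (φ : G ↪g H)
    (hφ : ∀ u w, H.Adj (φ u) w → w ∈ Set.range φ) (u : V) {w : W} (q : H.Walk (φ u) w) :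
    ∃ v, φ v = w ∧ ∃ p : G.Walk u v, p.length = q.length := by
  generalize hx : φ u = x at q
  induction q generalizing u with
  | nil => exact ⟨u, hx, .nil, rfl⟩
  | cons hadj q ih =>
    subst hx
    obtain ⟨u', rfl⟩ := hφ u _ hadj
    obtain ⟨v, hv, p, hp⟩ := ih u' rfl
    exact ⟨v, hv, .cons (φ.map_adj_iff.mp hadj) p, by simp [hp]⟩

theorem edist_map_of_adj_closed (φ : G ↪g H)
    (hφ : ∀ u w, H.Adj (φ u) w → w ∈ Set.range φ) (u v : V) :
    H.edist (φ u) (φ v) = G.edist u v := by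
  apply le_antisymm
  · refine le_iInf fun p => ?_
    simpa using SimpleGraph.edist_le (p.map φ.toHom)
  · refine le_iInf fun q => ?_
    obtain ⟨v', hv', p, hp⟩ := exists_walk_length_eq_of_adj_closed φ hφ u q
    obtain rfl := φ.injective hv'
    exact hp ▸ SimpleGraph.edist_le p

end Distance

section DistanceCounts

variable {V W : Type*} [Fintype V] [Fintype W] {G : SimpleGraph V} {H : SimpleGraph W}

theorem nCount_eq_ncard_edist (G : SimpleGraph V) (k : ℕ) (v : V) :
    nCount G k v = {w | G.edist v w = k}.ncard := by
  unfold nCount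
  congr 1
  ext w
  rw [Set.mem_ofPred_eq, Set.mem_ofPred_eq, SimpleGraph.edist_comm]
  constructor
  · rintro ⟨hreach, rfl⟩
    exact hreach.coe_dist_eq_edist.symm
  · intro hk
    have hreach : G.Reachable w v := SimpleGraph.edist_ne_top_iff_reachable.mp (by simp [hk])
    exact ⟨hreach, by exact_mod_cast hreach.coe_dist_eq_edist.trans hk⟩

theorem nCount_eq_card_filter {v : V} {f : V → ℕ} (hf : ∀ w, G.edist v w = f w) (k : ℕ) :
    nCount G k v = #{w | f w = k} := by
  simp [nCount_eq_ncard_edist, hf, ← Set.ncard_coe_finset]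

theorem nCount_map_of_adj_closed (φ : G ↪g H)
    (hφ : ∀ u w, H.Adj (φ u) w → w ∈ Set.range φ) (k : ℕ) (v : V) :
    nCount H k (φ v) = nCount G k v := by
  rw [nCount_eq_ncard_edist, nCount_eq_ncard_edist, ← Set.ncard_image_of_injective _ φ.injective]
  congr 1
  ext w
  constructor
  · intro hw
    obtain ⟨q, -⟩ := SimpleGraph.exists_walk_of_edist_eq_coe hw
    obtain ⟨u, rfl, -⟩ := exists_walk_length_eq_of_adj_closed φ hφ v q
    exact ⟨u, (edist_map_of_adj_closed φ hφ v u).symm.trans hw, rfl⟩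
  · rintro ⟨u, hu, rfl⟩
    exact (edist_map_of_adj_closed φ hφ v u).trans hu

theorem dcmRows_eq_sum (G : SimpleGraph V) (n : ℕ) :
    dcmRows G n = ∑ v, {fun k : Fin n => nCount G k v} :=
  (Multiset.bind_singleton _ _).symm

theorem dcmRows_iso (e : G ≃g H) (n : ℕ) : dcmRows H n = dcmRows G n := by
  have hcount := nCount_map_of_adj_closed e.toEmbedding fun _ w _ => e.surjective w
  rw [dcmRows_eq_sum, dcmRows_eq_sum, ← e.toEquiv.sum_comp]
  exact Finset.sum_congr rfl fun v _ =>
    congrArg singleton (funext fun k : Fin n => hcount k v)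

end DistanceCounts

section DisjointUnion

variable {κ : Type*} {V : κ → Type*}

/-- The disjoint union of a family of graphs, as a graph on the sigma type of the vertex types. -/
def disjointUnion (G : ∀ j, SimpleGraph (V j)) : SimpleGraph (Σ j, V j) :=
  ⨆ j, (G j).map (Function.Embedding.sigmaMk j)

theorem disjointUnion_adj_mk {G : ∀ j, SimpleGraph (V j)} {j : κ} {u : V j} {w : Σ j, V j} :
    (disjointUnion G).Adj ⟨j, u⟩ w ↔ ∃ v, (G j).Adj u v ∧ ⟨j, v⟩ = w := by
  simp only [disjointUnion, SimpleGraph.iSup_adj, SimpleGraph.map_adj,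
    Function.Embedding.sigmaMk_apply]
  constructor
  · rintro ⟨j', u', v, hadj, hu, hw⟩
    cases hu
    exact ⟨v, hadj, hw⟩
  · rintro ⟨v, hadj, hw⟩
    exact ⟨j, u, v, hadj, rfl, hw⟩

theorem dcmRows_disjointUnion [Fintype κ] [∀ j, Fintype (V j)] (G : ∀ j, SimpleGraph (V j))
    (n : ℕ) : dcmRows (disjointUnion G) n = ∑ j, dcmRows (G j) n := by
  let inclusion (j : κ) : G j ↪g disjointUnion G :=
    ⟨Function.Embedding.sigmaMk j, by simp [disjointUnion_adj_mk]⟩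
  have hcount (j : κ) (v : V j) (k : ℕ) :
      nCount (disjointUnion G) k ⟨j, v⟩ = nCount (G j) k v := by
    refine nCount_map_of_adj_closed (inclusion j) (fun u w hadj => ?_) k v
    obtain ⟨v', -, hv'⟩ := disjointUnion_adj_mk.mp hadj
    exact ⟨v', hv'⟩
  simp only [dcmRows_eq_sum, Fintype.sum_sigma, hcount]

end DisjointUnion

section SubdividedStar

variable {ι E : Type*}

/-- The star with hub `none` and terminals `some (.inl i)`, having one edge from the hub to
`π e` for each `e : E`, with every edge `e` subdivided by a midpoint `some (.inr e)`. -/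
def subdividedStar (π : E → ι) : SimpleGraph (Option (ι ⊕ E)) where
  Adj
    | none, some (.inr _) | some (.inr _), none => True
    | some (.inl i), some (.inr e) | some (.inr e), some (.inl i) => π e = i
    | _, _ => False
  symm := ⟨by rintro (_ | _ | _) (_ | _ | _) h <;> exact h⟩
  loopless := ⟨by rintro (_ | _ | _) h <;> exact h⟩

/-- The distance function of `subdividedStar π` when every terminal is the end of some edge. -/
def subdividedStarDist [DecidableEq ι] [DecidableEq E] (π : E → ι) :
    Option (ι ⊕ E) → Option (ι ⊕ E) → ℕ
  | none, none => 0
  | none, some (.inr _) | some (.inr _), none => 1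
  | none, some (.inl _) | some (.inl _), none => 2
  | some (.inl i), some (.inl j) => if j = i then 0 else 4
  | some (.inl i), some (.inr e) | some (.inr e), some (.inl i) => if π e = i then 1 else 3
  | some (.inr e), some (.inr e') => if e' = e then 0 else 2

theorem exists_adj_subdividedStarDist_eq_add_one [DecidableEq ι] [DecidableEq E] {π : E → ι}
    (hπ : Function.Surjective π) {v w : Option (ι ⊕ E)} (hne : w ≠ v) :
    ∃ u, (subdividedStar π).Adj u w ∧ subdividedStarDist π v w = subdividedStarDist π v u + 1 := by
  rcases w with _ | j | e
  · rcases v with _ | i | e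
    · exact absurd rfl hne
    · obtain ⟨e, rfl⟩ := hπ i
      exact ⟨some (.inr e), by simp [subdividedStar, subdividedStarDist]⟩
    · exact ⟨some (.inr e), by simp [subdividedStar, subdividedStarDist]⟩
  · obtain ⟨e, rfl⟩ := hπ j
    rcases v with _ | i | e'
    · exact ⟨some (.inr e), by simp [subdividedStar, subdividedStarDist]⟩
    · exact ⟨some (.inr e), by simp_all [subdividedStar, subdividedStarDist]⟩
    · by_cases he : π e' = π e
      · exact ⟨some (.inr e'), by simp [subdividedStar, subdividedStarDist, he]⟩
      · have hne' : e ≠ e' := by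
          rintro rfl
          exact he rfl
        exact ⟨some (.inr e), by simp [subdividedStar, subdividedStarDist, he, hne']⟩
  · rcases v with _ | i | e'
    · exact ⟨none, by simp [subdividedStar, subdividedStarDist]⟩
    · by_cases he : π e = i
      · exact ⟨some (.inl i), by simp [subdividedStar, subdividedStarDist, he]⟩
      · exact ⟨none, by simp [subdividedStar, subdividedStarDist, he]⟩
    · exact ⟨none, by simp_all [subdividedStar, subdividedStarDist]⟩

theorem edist_subdividedStar [DecidableEq ι] [DecidableEq E] {π : E → ι}
    (hπ : Function.Surjective π) (v w : Option (ι ⊕ E)) :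
    (subdividedStar π).edist v w = subdividedStarDist π v w := by
  refine edist_eq_of_layering ?_ ?_ (fun w hne => ?_) w
  · rcases v with _ | _ | _ <;> simp [subdividedStarDist]
  · rcases v with _ | _ | _ <;> rintro (_ | _ | _) (_ | _ | _) hadj <;>
      simp_all only [subdividedStar, subdividedStarDist] <;> grind
  · exact exists_adj_subdividedStarDist_eq_add_one hπ hne

variable [Fintype ι] [Fintype E]

theorem nCount_subdividedStar [DecidableEq ι] [DecidableEq E] {π : E → ι}
    (hπ : Function.Surjective π) (v : Option (ι ⊕ E)) (k : ℕ) :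
    nCount (subdividedStar π) k v =
      (if subdividedStarDist π v none = k then 1 else 0) +
        (#{i : ι | subdividedStarDist π v (some (.inl i)) = k} +
          #{e : E | subdividedStarDist π v (some (.inr e)) = k}) := by
  rw [nCount_eq_card_filter (edist_subdividedStar hπ v) k, Finset.card_filter,
    Fintype.sum_option, Fintype.sum_sum_type, ← Finset.card_filter, ← Finset.card_filter]

theorem nCount_subdividedStar_hub {π : E → ι} (hπ : Function.Surjective π) (k : ℕ) :
    nCount (subdividedStar π) k none = [1, Fintype.card E, Fintype.card ι].getD k 0 := by
  classical
  rw [nCount_subdividedStar hπ]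
  rcases k with _ | _ | _ | k <;> simp [subdividedStarDist]

theorem nCount_subdividedStar_terminal [DecidableEq ι] {π : E → ι} (hπ : Function.Surjective π)
    (i : ι) (k : ℕ) :
    nCount (subdividedStar π) k (some (.inl i)) =
      [1, #{e | π e = i}, 1, Fintype.card E - #{e | π e = i}, Fintype.card ι - 1].getD k 0 := by
  classical
  rw [nCount_subdividedStar hπ]
  rcases k with _ | _ | _ | _ | _ | k <;>
    simp [subdividedStarDist, ite_eq_iff, Finset.filter_eq', Finset.filter_not, Finset.card_sdiff]

theorem nCount_subdividedStar_midpoint {π : E → ι} (hπ : Function.Surjective π) (e : E) (k : ℕ) :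
    nCount (subdividedStar π) k (some (.inr e)) =
      [1, 2, Fintype.card E - 1, Fintype.card ι - 1].getD k 0 := by
  let _ := Classical.decEq ι
  let _ := Classical.decEq E
  rw [nCount_subdividedStar hπ]
  rcases k with _ | _ | _ | _ | k <;>
    simp [subdividedStarDist, ite_eq_iff, Finset.filter_eq, Finset.filter_eq', Finset.filter_not,
      Finset.card_sdiff]

theorem dcmRows_subdividedStar [DecidableEq ι] {π : E → ι} (hπ : Function.Surjective π)
    (hι : Fintype.card ι = 3) (n : ℕ) :
    dcmRows (subdividedStar π) n =
      ∑ i, {rowI n (Fintype.card E) #{e | π e = i}} +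
        Multiset.replicate (Fintype.card E) (rowII n (Fintype.card E)) +
        {rowIII n (Fintype.card E)} := by
  have hhub : (fun k : Fin n => nCount (subdividedStar π) k none) = rowIII n (Fintype.card E) := by
    ext ⟨k, hk⟩
    rw [nCount_subdividedStar_hub hπ, hι]
    rcases k with _ | _ | _ | k <;> simp [rowIII]
  have hterminal (i : ι) : (fun k : Fin n => nCount (subdividedStar π) k (some (.inl i))) =
      rowI n (Fintype.card E) #{e | π e = i} := by
    ext ⟨k, hk⟩
    rw [nCount_subdividedStar_terminal hπ, hι]
    rcases k with _ | _ | _ | _ | _ | k <;> simp [rowI]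
  have hmidpoint (e : E) : (fun k : Fin n => nCount (subdividedStar π) k (some (.inr e))) =
      rowII n (Fintype.card E) := by
    ext ⟨k, hk⟩
    rw [nCount_subdividedStar_midpoint hπ, hι]
    rcases k with _ | _ | _ | _ | k <;> simp [rowII]
  simp only [dcmRows_eq_sum, Fintype.sum_option, Fintype.sum_sum_type, hhub, hterminal, hmidpoint,
    Finset.sum_const, Finset.card_univ, Multiset.nsmul_singleton]
  exact add_comm _ _

end SubdividedStar

section BlockStar

variable {ι : Type*}

theorem card_filter_fst_eq [Fintype ι] [DecidableEq ι] {β : ι → Type*} [∀ i, Fintype (β i)]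
    (i : ι) : #{p : Σ i, β i | p.1 = i} = Fintype.card (β i) := by
  rw [← Fintype.card_subtype, Fintype.card_congr (Equiv.sigmaSubtype i)]

/-- The component realising a block `s` of the partition: terminals `i ∈ s`, each joined to the
hub by `a i` subdivided edges. -/
abbrev blockStar (a : ι → ℕ) (s : Finset ι) : SimpleGraph (Option (s ⊕ Σ i : s, Fin (a i))) :=
  subdividedStar Sigma.fst

theorem dcmRows_blockStar {a : ι → ℕ} {s : Finset ι} (ha : ∀ i ∈ s, 1 ≤ a i) (hs : #s = 3)
    (n : ℕ) :
    dcmRows (blockStar a s) n =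
      ∑ i ∈ s, {rowI n (∑ i ∈ s, a i) (a i)} +
        Multiset.replicate (∑ i ∈ s, a i) (rowII n (∑ i ∈ s, a i)) +
        {rowIII n (∑ i ∈ s, a i)} := by
  classical
  have hsurj : Function.Surjective (Sigma.fst : (Σ i : s, Fin (a i)) → s) :=
    fun i => ⟨⟨i, 0, ha i i.2⟩, rfl⟩
  have hcard : Fintype.card (Σ i : s, Fin (a i)) = ∑ i ∈ s, a i := by
    simp [Finset.sum_attach]
  rw [dcmRows_subdividedStar hsurj (by simpa using hs), hcard]
  simp only [card_filter_fst_eq, Fintype.card_fin]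
  rw [Finset.sum_coe_sort s fun i => {rowI n (∑ i ∈ s, a i) (a i)}]

end BlockStar

/-- Let `m ≥ 1` and `a_1, …, a_{3m}` be natural numbers with `a_i ≥ 1` and
`Σ a_i = m·t`. If the instance admits a three-partition, then there is a simple graph
on `n = 4m + m·t = (t+4)·m` vertices whose distance-count matrix equals `M(a)` up to
permutation of rows, i.e. whose multiset of rows is the prescribed one. -/
theorem DCM_of_threePartition (m t : ℕ) (hm : 1 ≤ m) (a : Fin (3 * m) → ℕ)
    (hpos : ∀ i, 1 ≤ a i) (hsum : ∑ i, a i = m * t)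
    (hpart : HasThreePartition m t a) :
    ∃ G : SimpleGraph (Fin (4 * m + m * t)),
      dcmRows G (4 * m + m * t) = targetRows m t a := by
  obtain ⟨D, hdisj, hcover, hcard, hD⟩ := hpart
  let G := disjointUnion fun j => blockStar a (D j)
  have hV : Fintype.card (Σ j, Option (D j ⊕ Σ i : D j, Fin (a i))) = 4 * m + m * t := by
    simp only [Fintype.card_sigma, Fintype.card_option, Fintype.card_sum, Fintype.card_coe,
      Fintype.card_fin, Finset.sum_coe_sort _ a, hcard, hD, Finset.sum_const, Finset.card_univ,
      smul_eq_mul]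
    ring
  have hrows : ∑ j, dcmRows (blockStar a (D j)) (4 * m + m * t) = targetRows m t a := by
    simp only [dcmRows_blockStar (fun i _ => hpos i) (hcard _), hD, Finset.sum_add_distrib,
      Finset.sum_const, Finset.card_univ, Fintype.card_fin, Multiset.nsmul_replicate,
      Multiset.nsmul_singleton]
    rw [← sum_univ_eq_sum_of_partition (fun j j' => hdisj j j') hcover]
    exact congrArg (· + _ + _) (Multiset.bind_singleton _ _)
  refine ⟨G.overFin hV, ?_⟩
  rw [dcmRows_iso (G.overFinIso hV), dcmRows_disjointUnion, hrows]
end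

section
/- Let m ≥ 1 and let a_1 ≥ a_2 ≥ ⋯ ≥ a_{3m} be natural numbers with Σ_{i=1}^{3m} a_i = m·t, t ≥ 4, 4·a_i > t and 2·a_i < t for all i, a_{3m} ≥ 3, and a_i − a_{i+1} ≥ 3 for all i = 1,…,3m−1. Set s = m·t and n = 4m + s = (t+4)m. Then the following are equivalent: (1) there exists a three-partition of {1,…,3m} into m disjoint triples each with sum t; (2) there exists a simple graph G on n vertices whose distance-count matrix equals M(a) up to permutation of rows, i.e., the multiset of rows (n_0(v), n_1(v), …, n_{n−1}(v)) over all vertices v of G equals the multiset consisting of the row (1, a_i, 1, t−a_i, 2, 0, …, 0) for each i = 1,…,3m, the row (1, 2, t−1, 2, 0, …, 0) with multiplicity s, and the row (1, t, 3, 0, …, 0) with multiplicity m. -/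
/-!
If `c` is the only vertex at distance `2` from `v`, every vertex at distance `3` and some neighbour
of `v` are adjacent to `c`, so `n_3(v) < n_1(c)`. When `v` has the row of some `a i`, this degree
bound forces `c` to have degree `t`, and counting shows that all neighbours of `v` are then
neighbours of `c`. Vertices `v` sharing `c` have disjoint neighbourhoods, so each of the `m`
vertices `c` receives at most three of the `a i`, of total at most `t`; summing over all `c` makes
both bounds equalities. Conversely, a three-partition is realized by the graph in which the vertex
of `a i` has `a i` neighbours, each of which is joined to the vertex of the triple of `i`.
-/

open Finset

section EquivOfMultiset

variable {α β γ : Type*} [Fintype α] [Fintype β]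

theorem map_univ_val_eq_iff_exists_equiv {f : α → γ} {g : β → γ} :
    univ.val.map f = univ.val.map g ↔ ∃ e : α ≃ β, ∀ x, g (e x) = f x := by
  classical
  refine ⟨fun h => ?_, fun ⟨e, he⟩ => ?_⟩
  · have hfiber (c : γ) : Nonempty ({x // f x = c} ≃ {y // g y = c}) := by
      have hcount := congrArg (Multiset.count c) h
      rw [Multiset.count_map, Multiset.count_map] at hcount
      refine Fintype.card_eq.mp ?_
      rw [Fintype.card_subtype, Fintype.card_subtype]
      simpa [card_def, filter_val, eq_comm] using hcount
    exact ⟨.ofFiberEquiv fun c => (hfiber c).some, Equiv.ofFiberEquiv_map _⟩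
  · rw [← Multiset.map_univ_val_equiv e, Multiset.map_map]
    exact Multiset.map_congr rfl fun x _ => (he x).symm

theorem dcmRows_eq_map_iff_exists_equiv {n : ℕ} {G : SimpleGraph β} {r : α → Fin n → ℕ} :
    dcmRows G n = univ.val.map r ↔
      ∃ e : α ≃ β, ∀ x, (fun k : Fin n => nCount G k (e x)) = r x :=
  eq_comm.trans map_univ_val_eq_iff_exists_equiv

end EquivOfMultiset

section EDist

variable {V W : Type*} {G : SimpleGraph V} {H : SimpleGraph W} {u v w : V} {k : ℕ}

theorem reachable_and_dist_eq_iff : G.Reachable u v ∧ G.dist u v = k ↔ G.edist u v = k := by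
  constructor
  · rintro ⟨h, rfl⟩
    exact h.coe_dist_eq_edist.symm
  · intro h
    have hr : G.Reachable u v := SimpleGraph.reachable_of_edist_ne_top (by simp [h])
    exact ⟨hr, by simpa [h] using hr.coe_dist_eq_edist⟩

theorem edist_hom_le (φ : G →g H) (u v : V) : H.edist (φ u) (φ v) ≤ G.edist u v := by
  refine le_iInf fun p => ?_
  rw [← p.length_map φ]
  exact SimpleGraph.edist_le _

theorem edist_iso (φ : G ≃g H) (u v : V) : H.edist (φ u) (φ v) = G.edist u v :=
  (edist_hom_le φ.toHom u v).antisymm <| by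
    simpa using edist_hom_le φ.symm.toHom (φ u) (φ v)

theorem nCount_iso [Fintype V] [Fintype W] (φ : G ≃g H) (k : ℕ) (v : V) :
    nCount H k (φ v) = nCount G k v := by
  simp_rw [nCount, reachable_and_dist_eq_iff]
  rw [← Set.ncard_image_of_injective _ φ.injective]
  congr 1
  ext w
  obtain ⟨w, rfl⟩ := φ.surjective w
  simp [edist_iso]

theorem edist_le_edist_add_one (h : G.Adj u w) (v : V) : G.edist u v ≤ G.edist w v + 1 := by
  rw [add_comm, ← SimpleGraph.edist_eq_one_iff_adj.mpr h]
  exact SimpleGraph.edist_triangle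

theorem exists_adj_edist_eq (h : G.edist u v = (k + 1 : ℕ)) :
    ∃ w, G.Adj u w ∧ G.edist w v = k := by
  obtain ⟨p, hp⟩ := SimpleGraph.exists_walk_of_edist_eq_coe h
  cases p with
  | nil => simp at hp
  | @cons _ w _ hadj q =>
    refine ⟨w, hadj, le_antisymm ?_ ?_⟩
    · rw [SimpleGraph.Walk.length_cons, add_left_inj] at hp
      exact hp ▸ SimpleGraph.edist_le q
    · have hle := edist_le_edist_add_one hadj v
      rw [h, Nat.cast_add_one] at hle
      exact (ENat.add_le_add_iff_right ENat.one_ne_top).mp hle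

theorem edist_eq_of_lipschitz_of_descent {d : V → ℕ∞} (hzero : d v = 0)
    (hlip : ∀ ⦃u w⦄, G.Adj u w → d u ≤ d w + 1)
    (hdesc : ∀ w, w ≠ v → d w ≠ ⊤ → ∃ u, G.Adj w u ∧ d u + 1 ≤ d w) (w : V) :
    G.edist w v = d w := by
  apply le_antisymm
  · induction hw : d w using WellFoundedLT.induction generalizing w with
    | ind _ ih =>
      subst hw
      by_cases hwv : w = v
      · simp [hwv]
      by_cases htop : d w = ⊤
      · simp [htop]
      obtain ⟨u, hadj, hu⟩ := hdesc w hwv htop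
      have hlt : d u < d w := (ENat.add_one_le_iff' htop).mp hu
      calc G.edist w v ≤ G.edist u v + 1 := edist_le_edist_add_one hadj v
        _ ≤ d u + 1 := by gcongr; exact ih _ hlt u rfl
        _ ≤ d w := hu
  · refine le_iInf fun p => ?_
    induction p with
    | nil => simp [hzero]
    | cons hadj p ih =>
      rw [SimpleGraph.Walk.length_cons, Nat.cast_add_one]
      exact (hlip hadj).trans (by gcongr; exact ih hzero hdesc)

end EDist

section DistSphere

variable {V : Type*} [Fintype V] {G : SimpleGraph V} {c u v w : V} {k : ℕ}

open Classical in
/-- The set `N_k(v)` of vertices at distance `k` from `v`. The extended distance takes care of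
the reachability clause, since it is `⊤` across components. -/
noncomputable def distSphere (G : SimpleGraph V) (v : V) (k : ℕ) : Finset V :=
  {w | G.edist w v = k}

theorem mem_distSphere : w ∈ distSphere G v k ↔ G.edist w v = k := by
  simp [distSphere]

theorem card_distSphere (G : SimpleGraph V) (v : V) (k : ℕ) :
    #(distSphere G v k) = nCount G k v := by
  simp_rw [nCount, reachable_and_dist_eq_iff, ← mem_distSphere, setOfPred_mem,
    Set.ncard_coe_finset]

theorem mem_distSphere_one : w ∈ distSphere G v 1 ↔ G.Adj w v := by
  simp [mem_distSphere]

theorem edist_eq_of_distSphere_eq_singleton (hc : distSphere G v k = {c}) :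
    G.edist c v = k :=
  mem_distSphere.mp (hc ▸ mem_singleton_self c)

theorem exists_distSphere_eq_singleton (h : nCount G k v = 1) : ∃ c, distSphere G v k = {c} :=
  card_eq_one.mp ((card_distSphere G v k).trans h)

theorem nCount_lt_of_distSphere_eq_singleton (hc : distSphere G v (k + 1) = {c}) :
    nCount G (k + 2) v < nCount G 1 c := by
  obtain ⟨x, hcx, hx⟩ := exists_adj_edist_eq (edist_eq_of_distSphere_eq_singleton hc)
  rw [← card_distSphere, ← card_distSphere]
  refine card_lt_card <| (ssubset_iff_of_subset fun w hw => ?_).mpr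
    ⟨x, mem_distSphere_one.mpr hcx.symm, fun hx' => ?_⟩
  · obtain ⟨y, hwy, hy⟩ := exists_adj_edist_eq (mem_distSphere.mp hw)
    obtain rfl : y = c := by rwa [← mem_distSphere, hc, mem_singleton] at hy
    exact mem_distSphere_one.mpr hwy
  · rw [mem_distSphere, hx, Nat.cast_inj] at hx'
    omega

theorem distSphere_one_subset_union [DecidableEq V] (hc : distSphere G v (k + 1) = {c}) :
    distSphere G c 1 ⊆ distSphere G v k ∪ distSphere G v (k + 2) := by
  intro w hw
  rw [mem_distSphere_one] at hw
  have hcv := edist_eq_of_distSphere_eq_singleton hc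
  have hne : G.edist w v ≠ (k + 1 : ℕ) := fun h =>
    hw.ne <| by rwa [← mem_distSphere, hc, mem_singleton] at h
  have hle := edist_le_edist_add_one hw v
  have hge := edist_le_edist_add_one hw.symm v
  rw [hcv] at hle hge
  rw [mem_union, mem_distSphere, mem_distSphere]
  cases hd : G.edist w v using ENat.recTopCoe with
  | top => simp [hd] at hle
  | coe d =>
    rw [hd] at hle hge hne
    norm_cast at *
    omega

theorem distSphere_subset_distSphere_one (hc : distSphere G v (k + 1) = {c})
    (hcard : nCount G k v + nCount G (k + 2) v ≤ nCount G 1 c) :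
    distSphere G v k ⊆ distSphere G c 1 := by
  classical
  have hunion : #(distSphere G v k ∪ distSphere G v (k + 2)) ≤ #(distSphere G c 1) :=
    (card_union_le _ _).trans (by simpa only [card_distSphere])
  rw [eq_of_subset_of_card_le (distSphere_one_subset_union hc) hunion]
  exact subset_union_left

theorem disjoint_distSphere_one (huv : u ≠ v) (hu : distSphere G u 2 = {c})
    (hv : distSphere G v 2 = {c}) (hsub : distSphere G v 1 ⊆ distSphere G c 1) :
    Disjoint (distSphere G u 1) (distSphere G v 1) := by
  have hcu : G.edist u c = 2 := by
    rw [SimpleGraph.edist_comm]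
    exact edist_eq_of_distSphere_eq_singleton hu
  refine disjoint_left.mpr fun w hwu hwv => ?_
  rw [mem_distSphere_one] at hwu hwv
  have hnadj : ¬ G.Adj u v := fun h => by
    simp [mem_distSphere.mp (hsub (mem_distSphere_one.mpr h))] at hcu
  have hdist : G.edist u v = 2 :=
    SimpleGraph.edist_eq_two_iff.mpr ⟨huv, hnadj, w, hwu.symm, hwv.symm⟩
  obtain rfl : u = c := by
    rw [← mem_singleton, ← hv, mem_distSphere, hdist, Nat.cast_ofNat]
  simp at hcu

theorem card_le_nCount_two {s : Finset V} (hs : ∀ v ∈ s, distSphere G v 2 = {c}) :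
    #s ≤ nCount G 2 c := by
  rw [← card_distSphere]
  refine card_le_card fun v hv => ?_
  rw [mem_distSphere, SimpleGraph.edist_comm]
  exact edist_eq_of_distSphere_eq_singleton (hs v hv)

theorem sum_nCount_one_le {s : Finset V} (hs : ∀ v ∈ s, distSphere G v 2 = {c})
    (hsub : ∀ v ∈ s, distSphere G v 1 ⊆ distSphere G c 1) :
    ∑ v ∈ s, nCount G 1 v ≤ nCount G 1 c := by
  classical
  simp_rw [← card_distSphere]
  rw [← card_biUnion fun u hu v hv huv =>
    disjoint_distSphere_one huv (hs u hu) (hs v hv) (hsub v hv)]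
  exact card_le_card (biUnion_subset.mpr hsub)

end DistSphere

section Assignment

variable {V ι κ : Type*} [Fintype V] [Fintype ι] [DecidableEq κ] {G : SimpleGraph V}
  {p : ι → V} {q : κ → V}

theorem exists_assignment_of_nCount (hp : p.Injective) (htwo : ∀ i, nCount G 2 (p i) = 1)
    (hle : ∀ i j, nCount G 1 (p i) + nCount G 3 (p i) ≤ nCount G 1 (q j))
    (hq : ∀ i v, nCount G 3 (p i) < nCount G 1 v → v ∈ Set.range q) :
    ∃ f : ι → κ, ∀ j, #{i | f i = j} ≤ nCount G 2 (q j) ∧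
      ∑ i with f i = j, nCount G 1 (p i) ≤ nCount G 1 (q j) := by
  have hcentre (i : ι) : ∃ j, distSphere G (p i) 2 = {q j} := by
    obtain ⟨c, hc⟩ := exists_distSphere_eq_singleton (htwo i)
    obtain ⟨j, rfl⟩ := hq i c (nCount_lt_of_distSphere_eq_singleton hc)
    exact ⟨j, hc⟩
  choose f hf using hcentre
  refine ⟨f, fun j => ?_⟩
  have hfiber : ∀ v ∈ ({i | f i = j} : Finset ι).map ⟨p, hp⟩,
      distSphere G v 2 = {q j} ∧ distSphere G v 1 ⊆ distSphere G (q j) 1 := by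
    simp only [mem_map, mem_filter_univ, Function.Embedding.coeFn_mk]
    rintro _ ⟨i, rfl, rfl⟩
    exact ⟨hf i, distSphere_subset_distSphere_one (hf i) (hle i (f i))⟩
  exact ⟨by simpa using card_le_nCount_two fun v hv => (hfiber v hv).1,
    by simpa using sum_nCount_one_le (fun v hv => (hfiber v hv).1) fun v hv => (hfiber v hv).2⟩

end Assignment

section PackingGraph

/-- Vertices of the packing graph: one for each item `i`, one for each of the `a i` units that make
up the item `i`, and one for each bin. -/
abbrev PackingVertex {ι : Type*} (a : ι → ℕ) (κ : Type*) : Type _ :=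
  ι ⊕ (Σ i, Fin (a i)) ⊕ κ

variable {ι κ : Type*} {a : ι → ℕ} {f : ι → κ}

/-- The graph of a packing `f` of items of sizes `a i` into bins: every unit is adjacent to its item
and to the bin of that item. -/
def packingGraph (a : ι → ℕ) (f : ι → κ) : SimpleGraph (PackingVertex a κ) :=
  .fromRel fun u v => match u, v with
    | .inr (.inl x), .inl i => i = x.1
    | .inr (.inl x), .inr (.inr j) => j = f x.1
    | _, _ => False

theorem packingGraph_adj_iff {u v : PackingVertex a κ} :
    (packingGraph a f).Adj u v ↔ ∃ x,
      (u = .inr (.inl x) ∧ (v = .inl x.1 ∨ v = .inr (.inr (f x.1)))) ∨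
      (v = .inr (.inl x) ∧ (u = .inl x.1 ∨ u = .inr (.inr (f x.1)))) := by
  rcases u with i | x | j <;> rcases v with i' | x' | j' <;> simp [packingGraph, eq_comm]

section Dist

variable [DecidableEq ι] [DecidableEq κ]

/-- The distance in the packing graph of `f` if no item is empty. Its connected components are the
bins with their contents. -/
def packingDist (f : ι → κ) : PackingVertex a κ → PackingVertex a κ → ℕ∞
  | .inl i, .inl i' => if i = i' then 0 else if f i = f i' then 4 else ⊤
  | .inl i, .inr (.inl x) | .inr (.inl x), .inl i =>
    if i = x.1 then 1 else if f i = f x.1 then 3 else ⊤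
  | .inl i, .inr (.inr j) | .inr (.inr j), .inl i => if f i = j then 2 else ⊤
  | .inr (.inl x), .inr (.inl y) => if x = y then 0 else if f x.1 = f y.1 then 2 else ⊤
  | .inr (.inl x), .inr (.inr j) | .inr (.inr j), .inr (.inl x) => if f x.1 = j then 1 else ⊤
  | .inr (.inr j), .inr (.inr j') => if j = j' then 0 else ⊤

theorem packingDist_self (v : PackingVertex a κ) : packingDist f v v = 0 := by
  rcases v with i | x | j <;> simp [packingDist]

theorem packingDist_le_add_one {u w : PackingVertex a κ} (h : (packingGraph a f).Adj u w)
    (v : PackingVertex a κ) : packingDist f u v ≤ packingDist f w v + 1 := by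
  obtain ⟨x, ⟨rfl, rfl | rfl⟩ | ⟨rfl, rfl | rfl⟩⟩ := packingGraph_adj_iff.mp h <;>
    rcases v with i | y | j <;> simp only [packingDist] <;> split_ifs <;> norm_num <;> grind

theorem exists_adj_packingDist_add_one_le (hpos : ∀ i, 0 < a i) {w v : PackingVertex a κ}
    (hne : w ≠ v) (htop : packingDist f w v ≠ ⊤) :
    ∃ u, (packingGraph a f).Adj w u ∧ packingDist f u v + 1 ≤ packingDist f w v := by
  simp only [packingGraph_adj_iff]
  rcases w with i | x | j
  · by_cases hv : ∃ y, v = .inr (.inl y) ∧ y.1 = i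
    · obtain ⟨y, rfl, rfl⟩ := hv
      exact ⟨.inr (.inl y), by simp, by simp [packingDist]⟩
    · refine ⟨.inr (.inl ⟨i, 0, hpos i⟩), by simp, ?_⟩
      rcases v with i' | y | j <;> simp only [packingDist] at htop ⊢ <;> split_ifs at htop ⊢ <;>
        norm_num <;> grind
  · by_cases hv : v = .inl x.1
    · exact ⟨.inl x.1, by simp, by simp [packingDist, hv]⟩
    · refine ⟨.inr (.inr (f x.1)), by simp, ?_⟩
      rcases v with i' | y | j <;> simp only [packingDist] at htop ⊢ <;> split_ifs at htop ⊢ <;>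
        norm_num <;> grind
  · rcases v with i | y | j'
    · obtain rfl : f i = j := by simpa [packingDist] using htop
      exact ⟨.inr (.inl ⟨i, 0, hpos i⟩), by simp, by norm_num [packingDist]⟩
    · obtain rfl : f y.1 = j := by simpa [packingDist] using htop
      exact ⟨.inr (.inl y), by simp, by simp [packingDist]⟩
    · simp_all [packingDist]

theorem edist_packingGraph (hpos : ∀ i, 0 < a i) (u v : PackingVertex a κ) :
    (packingGraph a f).edist u v = packingDist f u v :=
  edist_eq_of_lipschitz_of_descent (d := fun u => packingDist f u v) (packingDist_self v)
    (fun _ _ h => packingDist_le_add_one h v) (fun _ => exists_adj_packingDist_add_one_le hpos) u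

theorem nCount_packingGraph [Fintype ι] [Fintype κ] (hpos : ∀ i, 0 < a i) (k : ℕ)
    (v : PackingVertex a κ) :
    nCount (packingGraph a f) k v =
      #{i | packingDist f (.inl i) v = k} + (#{x | packingDist f (.inr (.inl x)) v = k} +
        #{j | packingDist f (.inr (.inr j)) v = k}) := by
  simp_rw [← card_distSphere, distSphere, edist_packingGraph hpos, card_filter,
    Fintype.sum_sum_type]

end Dist

section Count

variable {α : Type*} [Fintype α] {d : α → ℕ∞} {P Q : α → Prop} [DecidablePred P] {b c : ℕ}

theorem card_filter_eq_of_one_level (hd : ∀ y, d y = if P y then (b : ℕ∞) else ⊤) (k : ℕ) :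
    #{y | d y = k} = if k = b then #{y | P y} else 0 := by
  split_ifs with hk
  · congr 1 with y
    simp [hd, hk]
  · rw [card_eq_zero, filter_eq_empty_iff]
    intro y _
    rw [hd]
    split_ifs <;> simp [Ne.symm hk]

theorem card_filter_eq_of_two_levels [DecidablePred Q] (hPQ : ∀ y, P y → Q y) (hbc : b ≠ c)
    (hd : ∀ y, d y = if P y then (b : ℕ∞) else if Q y then (c : ℕ∞) else ⊤) (k : ℕ) :
    #{y | d y = k} =
      if k = b then #{y | P y} else if k = c then #{y | Q y} - #{y | P y} else 0 := by
  classical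
  split_ifs with hb hc
  · congr 1 with y
    simp only [mem_filter_univ, hd, hb]
    split_ifs <;> simp_all [hbc.symm]
  · rw [← card_sdiff_of_subset (monotone_filter_right _ fun y _ => hPQ y)]
    congr 1 with y
    simp only [mem_sdiff, mem_filter_univ, hd, hc]
    split_ifs <;> simp_all
  · rw [card_eq_zero, filter_eq_empty_iff]
    intro y _
    rw [hd]
    split_ifs <;> simp [Ne.symm hb, Ne.symm hc]

theorem card_units_filter_item [Fintype ι] (R : ι → Prop) [DecidablePred R] :
    #{x : Σ i, Fin (a i) | R x.1} = ∑ i with R i, a i := by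
  simp only [card_filter, sum_filter, Fintype.sum_sigma]
  refine sum_congr rfl fun i _ => ?_
  split_ifs <;> simp

end Count

section Rows

variable [Fintype ι] [Fintype κ] [DecidableEq κ]

theorem nCount_packingGraph_bin (hpos : ∀ i, 0 < a i) (k : ℕ) (j : κ) :
    nCount (packingGraph a f) k (.inr (.inr j)) =
      if k = 0 then 1 else if k = 1 then ∑ i with f i = j, a i
      else if k = 2 then #{i | f i = j} else 0 := by
  have := Classical.decEq ι
  have hitems : #{i | packingDist (a := a) f (.inl i) (.inr (.inr j)) = k} =
      if k = 2 then #{i | f i = j} else 0 :=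
    card_filter_eq_of_one_level (fun _ => rfl) k
  have hunits : #{x | packingDist (a := a) f (.inr (.inl x)) (.inr (.inr j)) = k} =
      if k = 1 then #{x : Σ i, Fin (a i) | f x.1 = j} else 0 :=
    card_filter_eq_of_one_level (fun _ => rfl) k
  have hbins : #{j' | packingDist (a := a) f (.inr (.inr j')) (.inr (.inr j)) = k} =
      if k = 0 then #{j' | j' = j} else 0 :=
    card_filter_eq_of_one_level (fun _ => rfl) k
  rw [nCount_packingGraph hpos, hitems, hunits, hbins, card_units_filter_item fun i => f i = j,
    filter_eq' univ j]
  grind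

theorem nCount_packingGraph_item (hpos : ∀ i, 0 < a i) (k : ℕ) (i : ι) :
    nCount (packingGraph a f) k (.inl i) =
      if k = 0 then 1 else if k = 1 then a i else if k = 2 then 1
      else if k = 3 then (∑ i' with f i' = f i, a i') - a i
      else if k = 4 then #{i' | f i' = f i} - 1 else 0 := by
  have := Classical.decEq ι
  have hitems : #{i' | packingDist (a := a) f (.inl i') (.inl i) = k} =
      if k = 0 then #{i' | i' = i} else
        if k = 4 then #{i' | f i' = f i} - #{i' | i' = i} else 0 :=
    card_filter_eq_of_two_levels (by grind) (by simp) (fun _ => rfl) k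
  have hunits : #{x | packingDist (a := a) f (.inr (.inl x)) (.inl i) = k} =
      if k = 1 then #{x : Σ i, Fin (a i) | i = x.1} else
        if k = 3 then #{x : Σ i, Fin (a i) | f i = f x.1} - #{x : Σ i, Fin (a i) | i = x.1}
        else 0 :=
    card_filter_eq_of_two_levels (by grind) (by simp) (fun _ => rfl) k
  have hbins : #{j | packingDist (a := a) f (.inr (.inr j)) (.inl i) = k} =
      if k = 2 then #{j | f i = j} else 0 :=
    card_filter_eq_of_one_level (fun _ => rfl) k
  rw [nCount_packingGraph hpos, hitems, hunits, hbins, card_units_filter_item fun i' => i = i',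
    card_units_filter_item fun i' => f i = f i']
  simp only [filter_eq, filter_eq', mem_univ, if_true, card_singleton, sum_singleton,
    eq_comm (a := f i)]
  grind

theorem nCount_packingGraph_unit (hpos : ∀ i, 0 < a i) (k : ℕ) (x : Σ i, Fin (a i)) :
    nCount (packingGraph a f) k (.inr (.inl x)) =
      if k = 0 then 1 else if k = 1 then 2 else if k = 2 then (∑ i with f i = f x.1, a i) - 1
      else if k = 3 then #{i | f i = f x.1} - 1 else 0 := by
  have := Classical.decEq ι
  have hitems : #{i | packingDist (a := a) f (.inl i) (.inr (.inl x)) = k} =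
      if k = 1 then #{i | i = x.1} else
        if k = 3 then #{i | f i = f x.1} - #{i | i = x.1} else 0 :=
    card_filter_eq_of_two_levels (by grind) (by simp) (fun _ => rfl) k
  have hunits : #{y | packingDist (a := a) f (.inr (.inl y)) (.inr (.inl x)) = k} =
      if k = 0 then #{y | y = x} else
        if k = 2 then #{y : Σ i, Fin (a i) | f y.1 = f x.1} - #{y | y = x} else 0 :=
    card_filter_eq_of_two_levels (by grind) (by simp) (fun _ => rfl) k
  have hbins : #{j | packingDist (a := a) f (.inr (.inr j)) (.inr (.inl x)) = k} =
      if k = 1 then #{j | f x.1 = j} else 0 :=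
    card_filter_eq_of_one_level (fun _ => rfl) k
  rw [nCount_packingGraph hpos, hitems, hunits, hbins,
    card_units_filter_item fun i => f i = f x.1]
  simp only [filter_eq, filter_eq', mem_univ, if_true, card_singleton]
  grind

end Rows

end PackingGraph

section ThreePartition

theorem eq_of_sum_eq_card_mul {ι : Type*} [Fintype ι] {x : ι → ℕ} {c : ℕ} (hle : ∀ i, x i ≤ c)
    (hsum : ∑ i, x i = Fintype.card ι * c) (i : ι) : x i = c := by
  have h : ∑ i, x i = ∑ _i : ι, c := by simp [hsum]
  exact (sum_eq_sum_iff_of_le fun i _ => hle i).mp h i (mem_univ i)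

theorem pos_of_card_le_three {ι : Type*} {s : Finset ι} {a : ι → ℕ} (hcard : #s ≤ 3)
    (hlt : ∀ i ∈ s, 2 * a i < ∑ i ∈ s, a i) {i : ι} (hi : i ∈ s) : 0 < a i := by
  classical
  by_contra! h0
  have hothers : ∑ i' ∈ s.erase i, 2 * a i' ≤ #(s.erase i) • ((∑ i ∈ s, a i) - 1) :=
    sum_le_card_nsmul _ _ _ fun i' hi' => Nat.le_sub_one_of_lt (hlt i' (mem_of_mem_erase hi'))
  have htwo : #(s.erase i) ≤ 2 := by rw [card_erase_of_mem hi]; omega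
  have hbound := hothers.trans (Nat.mul_le_mul_right _ htwo)
  rw [← mul_sum, sum_erase _ (Nat.le_zero.mp h0)] at hbound
  have := hlt i hi
  omega

variable {m t : ℕ} {a : Fin (3 * m) → ℕ}

theorem hasThreePartition_iff_exists_fibers :
    HasThreePartition m t a ↔ ∃ f : Fin (3 * m) → Fin m,
      (∀ j, #{i | f i = j} = 3) ∧ ∀ j, ∑ i with f i = j, a i = t := by
  constructor
  · rintro ⟨D, hdisj, hcover, hcard, hsum⟩
    have hmem (i : Fin (3 * m)) : ∃ j, i ∈ D j := by
      have hi : i ∈ ⋃ j, (D j : Set (Fin (3 * m))) := hcover ▸ Set.mem_univ i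
      simpa using hi
    choose f hf using hmem
    have hfiber (j : Fin m) : ({i | f i = j} : Finset _) = D j := by
      ext i
      rw [mem_filter_univ]
      refine ⟨fun h => h ▸ hf i, fun hi => ?_⟩
      by_contra hne
      exact disjoint_left.mp (hdisj _ _ hne) (hf i) hi
    exact ⟨f, fun j => by rw [hfiber, hcard], fun j => by rw [hfiber, hsum]⟩
  · rintro ⟨f, hcard, hsum⟩
    refine ⟨fun j => {i | f i = j}, fun j j' hne => ?_, ?_, hcard, hsum⟩
    · exact disjoint_filter.mpr fun i _ hi hi' => hne (hi.symm.trans hi')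
    · ext i
      simp

theorem hasThreePartition_of_fibers_le (hsum : ∑ i, a i = m * t) {f : Fin (3 * m) → Fin m}
    (hcard : ∀ j, #{i | f i = j} ≤ 3) (hle : ∀ j, ∑ i with f i = j, a i ≤ t) :
    HasThreePartition m t a := by
  refine hasThreePartition_iff_exists_fibers.mpr
    ⟨f, eq_of_sum_eq_card_mul hcard ?_, eq_of_sum_eq_card_mul hle ?_⟩
  · rw [← card_eq_sum_card_fiberwise fun i _ => mem_univ (f i)]
    simp [mul_comm]
  · rw [sum_fiberwise, hsum, Fintype.card_fin]

theorem three_le_of_sum_eq_mul (hm : 0 < m) (hsum : ∑ i, a i = m * t)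
    (hub : ∀ i, 2 * a i < t) : 3 ≤ t := by
  have hbound : ∑ i, (2 * a i + 1) ≤ ∑ _i : Fin (3 * m), t := sum_le_sum fun i _ => hub i
  rw [sum_add_distrib, ← mul_sum, hsum] at hbound
  simp only [sum_const, card_univ, Fintype.card_fin, smul_eq_mul, mul_one] at hbound
  exact Nat.le_of_mul_le_mul_left (by linarith) hm

end ThreePartition

section TargetRows

/-- The rows of `M(a)`, indexed by the vertices of a packing graph, which serve as canonical names
for the rows. -/
def packingRow {ι κ : Type*} {a : ι → ℕ} (n t : ℕ) : PackingVertex a κ → Fin n → ℕ :=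
  Sum.elim (fun i => rowI n t (a i)) (Sum.elim (fun _ => rowII n t) fun _ => rowIII n t)

theorem nCount_packingGraph_eq_packingRow {ι κ : Type*} [Fintype ι] [Fintype κ] [DecidableEq κ]
    {a : ι → ℕ} {f : ι → κ} {t : ℕ} (hpos : ∀ i, 0 < a i) (hcard : ∀ j, #{i | f i = j} = 3)
    (hsum : ∀ j, ∑ i with f i = j, a i = t) (n : ℕ) (v : PackingVertex a κ) :
    (fun k : Fin n => nCount (packingGraph a f) k v) = packingRow n t v := by
  funext k
  rcases v with i | x | j
  · simp only [nCount_packingGraph_item hpos, hcard, hsum, packingRow, Sum.elim_inl, rowI]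
  · simp only [nCount_packingGraph_unit hpos, hcard, hsum, packingRow, Sum.elim_inl,
      Sum.elim_inr, rowII]
  · simp only [nCount_packingGraph_bin hpos, hcard, hsum, packingRow, Sum.elim_inr, rowIII]

variable {m t : ℕ} {a : Fin (3 * m) → ℕ}

theorem targetRows_eq_map_packingRow (hsum : ∑ i, a i = m * t) :
    targetRows m t a = univ.val.map (packingRow (a := a) (κ := Fin m) (4 * m + m * t) t) := by
  rw [← univ_disjSum_univ, ← univ_disjSum_univ]
  simp only [disjSum, Multiset.disjSum, Multiset.map_add, Multiset.map_map, targetRows,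
    packingRow, Function.comp_def, Sum.elim_inl, Sum.elim_inr, Multiset.map_const', add_assoc]
  simp [hsum]

theorem dcmRows_eq_targetRows_iff (hsum : ∑ i, a i = m * t)
    {G : SimpleGraph (Fin (4 * m + m * t))} :
    dcmRows G (4 * m + m * t) = targetRows m t a ↔
      ∃ e : PackingVertex a (Fin m) ≃ Fin (4 * m + m * t),
        ∀ v, (fun k : Fin (4 * m + m * t) => nCount G k (e v)) = packingRow _ t v := by
  rw [targetRows_eq_map_packingRow hsum, dcmRows_eq_map_iff_exists_equiv]

theorem exists_dcmRows_eq_targetRows (hsum : ∑ i, a i = m * t) (hub : ∀ i, 2 * a i < t)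
    (h : HasThreePartition m t a) :
    ∃ G : SimpleGraph (Fin (4 * m + m * t)), dcmRows G (4 * m + m * t) = targetRows m t a := by
  obtain ⟨f, hcard, hfsum⟩ := hasThreePartition_iff_exists_fibers.mp h
  have hpos (i : Fin (3 * m)) : 0 < a i :=
    pos_of_card_le_three (hcard (f i)).le (fun i' _ => (hfsum (f i)).symm ▸ hub i')
      ((mem_filter_univ i).mpr rfl)
  have hV : Fintype.card (PackingVertex a (Fin m)) = Fintype.card (Fin (4 * m + m * t)) := by
    simp only [Fintype.card_sum, Fintype.card_sigma, Fintype.card_fin, hsum]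
    omega
  let e := Fintype.equivOfCardEq hV
  refine ⟨(packingGraph a f).map e, (dcmRows_eq_targetRows_iff hsum).mpr ⟨e, fun v => ?_⟩⟩
  rw [← nCount_packingGraph_eq_packingRow hpos hcard hfsum]
  exact funext fun k => nCount_iso (SimpleGraph.Iso.map e _) k v

theorem hasThreePartition_of_dcmRows_eq_targetRows (hsum : ∑ i, a i = m * t)
    (hub : ∀ i, 2 * a i < t) {G : SimpleGraph (Fin (4 * m + m * t))}
    (hG : dcmRows G (4 * m + m * t) = targetRows m t a) : HasThreePartition m t a := by
  obtain rfl | hm := m.eq_zero_or_pos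
  · exact hasThreePartition_iff_exists_fibers.mpr
      ⟨fun i => i.elim0, fun j => j.elim0, fun j => j.elim0⟩
  have ht := three_le_of_sum_eq_mul hm hsum hub
  obtain ⟨e, he⟩ := (dcmRows_eq_targetRows_iff hsum).mp hG
  have hn : 4 ≤ 4 * m + m * t := by omega
  have hrow (v) (k : ℕ) (hk : k < 4) : nCount G k (e v) = packingRow _ t v ⟨k, hk.trans_le hn⟩ :=
    congrFun (he v) ⟨k, hk.trans_le hn⟩
  have hitem₁ (i) : nCount G 1 (e (.inl i)) = a i := hrow _ 1 (by decide)
  have hitem₂ (i) : nCount G 2 (e (.inl i)) = 1 := hrow _ 2 (by decide)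
  have hitem₃ (i) : nCount G 3 (e (.inl i)) = t - a i := hrow _ 3 (by decide)
  have hunit₁ (x) : nCount G 1 (e (.inr (.inl x))) = 2 := hrow _ 1 (by decide)
  have hbin₁ (j) : nCount G 1 (e (.inr (.inr j))) = t := hrow _ 1 (by decide)
  have hbin₂ (j) : nCount G 2 (e (.inr (.inr j))) = 3 := hrow _ 2 (by decide)
  have hle (i j) : nCount G 1 (e (.inl i)) + nCount G 3 (e (.inl i)) ≤
      nCount G 1 (e (.inr (.inr j))) := by
    have := hub i
    rw [hitem₁, hitem₃, hbin₁]
    omega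
  have hrange (i v) (hv : nCount G 3 (e (.inl i)) < nCount G 1 v) :
      v ∈ Set.range fun j => e (.inr (.inr j)) := by
    obtain ⟨w, rfl⟩ := e.surjective v
    have := hub i
    rcases w with i' | x | j
    · have := hub i'
      rw [hitem₃, hitem₁] at hv
      omega
    · rw [hitem₃, hunit₁] at hv
      omega
    · exact ⟨j, rfl⟩
  obtain ⟨f, hf⟩ := exists_assignment_of_nCount (e.injective.comp Sum.inl_injective) hitem₂ hle
    hrange
  refine hasThreePartition_of_fibers_le hsum (fun j => hbin₂ j ▸ (hf j).1) fun j => ?_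
  simpa only [Function.comp_apply, hitem₁, hbin₁] using (hf j).2

theorem threePartition_iff_DCM_general (m t : ℕ) (a : Fin (3 * m) → ℕ) (hsum : ∑ i, a i = m * t)
    (hub : ∀ i, 2 * a i < t) :
    HasThreePartition m t a ↔
      ∃ G : SimpleGraph (Fin (4 * m + m * t)),
        dcmRows G (4 * m + m * t) = targetRows m t a :=
  ⟨exists_dcmRows_eq_targetRows hsum hub,
    fun ⟨_, hG⟩ => hasThreePartition_of_dcmRows_eq_targetRows hsum hub hG⟩

end TargetRows

/-- Let `m ≥ 1` and `a_1 ≥ a_2 ≥ ⋯ ≥ a_{3m}` be natural numbers with `Σ a_i = m·t`,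
`t ≥ 4`, `4·a_i > t` and `2·a_i < t` for all `i`, `a_{3m} ≥ 3`, and
`a_i - a_{i+1} ≥ 3` for all `i`. Then the instance `a` admits a three-partition into
`m` disjoint triples each of sum `t` if and only if there is a simple graph on
`n = 4m + m·t = (t+4)·m` vertices whose distance-count matrix equals `M(a)` up to
permutation of rows, i.e. whose multiset of rows is the prescribed one. -/
theorem threePartition_iff_DCM (m t : ℕ) (hm : 1 ≤ m) (a : Fin (3 * m) → ℕ)
    (hanti : ∀ i j : Fin (3 * m), i ≤ j → a j ≤ a i)
    (hsum : ∑ i, a i = m * t) (ht : 4 ≤ t)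
    (hlb : ∀ i, t < 4 * a i) (hub : ∀ i, 2 * a i < t)
    (hlast : 3 ≤ a ⟨3 * m - 1, by omega⟩)
    (hgap : ∀ i : ℕ, (h : i + 1 < 3 * m) → a ⟨i + 1, h⟩ + 3 ≤ a ⟨i, by omega⟩) :
    HasThreePartition m t a ↔
      ∃ G : SimpleGraph (Fin (4 * m + m * t)),
        dcmRows G (4 * m + m * t) = targetRows m t a :=
  threePartition_iff_DCM_general m t a hsum hub
end
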